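/- Let φ = {φ_i}_{i∈I} and ψ = {ψ_i}_{i∈I} be frames for a separable Hilbert space H with bounds A_φ ≤ B_φ and A_ψ ≤ B_ψ respectively. Suppose there exist nonnegative numbers λ₁, λ₂, μ such that for all {c_i}_{i∈I} ∈ ℓ²(I), ‖∑_{i∈I}c_i(φ_i − ψ_i)‖ ≤ λ₁‖∑_{i∈I}c_iφ_i‖ + λ₂‖∑_{i∈I}c_iψ_i‖ + μ(∑_{i∈I}|c_i|²)^{1/2}, and that λ₁√B_φ + λ₂√B_ψ + μ < √A_φ. Then φ and ψ are woven, with universal lower bound (√A_φ − λ₁√B_φ − λ₂√B_ψ − μ)² and universal upper bound B_φ + B_ψ. -/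

import Mathlib

/-!
The analysis operator `f ↦ (⟪f, φ i⟫)ᵢ` and the synthesis operator `c ↦ ∑ c i • φ i` are adjoint,
so a Bessel bound `B` is the same as a bound `√B` on synthesis. The perturbation hypothesis
therefore says that `φ - ψ` is a Bessel sequence with bound `ε ^ 2`, where
`ε = lam₁ √Bφ + lam₂ √Bψ + μ`. Every weaving differs from `φ` by a subfamily of `φ - ψ`, so by
Minkowski's inequality in `ℓ²` its analysis operator is bounded below by `√Aφ - ε`.
-/

open scoped ComplexInnerProductSpace

noncomputable section

variable {H : Type*} [NormedAddCommGroup H] [InnerProductSpace ℂ H] [CompleteSpace H]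
variable {I : Type*} [Countable I]

/-- `φ` is a Bessel sequence with Bessel bound `B`. -/
def IsBesselWith (φ : I → H) (B : ℝ) : Prop :=
  ∀ f : H, Summable (fun i => ‖⟪f, φ i⟫‖ ^ 2) ∧
    ∑' i, ‖⟪f, φ i⟫‖ ^ 2 ≤ B * ‖f‖ ^ 2

/-- `φ` is a frame with frame bounds `A ≤ B`. -/
def IsFrameWith (φ : I → H) (A B : ℝ) : Prop :=
  0 < A ∧ A ≤ B ∧ ∀ f : H, Summable (fun i => ‖⟪f, φ i⟫‖ ^ 2) ∧
    A * ‖f‖ ^ 2 ≤ ∑' i, ‖⟪f, φ i⟫‖ ^ 2 ∧ ∑' i, ‖⟪f, φ i⟫‖ ^ 2 ≤ B * ‖f‖ ^ 2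

/-- `φ` is a frame (for some choice of bounds). -/
def IsFrame (φ : I → H) : Prop := ∃ A B : ℝ, IsFrameWith φ A B

open Classical in
/-- The weaving of the families `φ` and `ψ` along the subset `J`:
it takes `φ i` for `i ∈ J` and `ψ i` for `i ∈ Jᶜ`. -/
def weaving (φ ψ : I → H) (J : Set I) : I → H := fun i => if i ∈ J then φ i else ψ i

/-- Two families are woven if there are universal frame bounds valid for all weavings. -/
def Woven (φ ψ : I → H) : Prop :=
  ∃ A B : ℝ, ∀ J : Set I, IsFrameWith (weaving φ ψ J) A B

lemma le_of_sq_le_mul_self {R : Type*} [Semiring R] [LinearOrder R] [IsStrictOrderedRing R]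
    {a b : R} (hb : 0 ≤ b) (h : a ^ 2 ≤ b * a) : a ≤ b := by
  by_contra! hba
  exact h.not_gt (sq a ▸ mul_lt_mul_of_pos_right hba (hb.trans_lt hba))

section FiniteFamilies

variable {𝕜 E ι : Type*} [RCLike 𝕜] [SeminormedAddCommGroup E] [InnerProductSpace 𝕜 E]

lemma norm_inner_sum_smul_le (s : Finset ι) (φ : ι → E) (c : ι → 𝕜) (f : E) :
    ‖inner 𝕜 f (∑ i ∈ s, c i • φ i)‖ ≤
      √(∑ i ∈ s, ‖c i‖ ^ 2) * √(∑ i ∈ s, ‖inner 𝕜 f (φ i)‖ ^ 2) :=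
  calc ‖inner 𝕜 f (∑ i ∈ s, c i • φ i)‖
      = ‖∑ i ∈ s, c i * inner 𝕜 f (φ i)‖ := by simp only [inner_sum, inner_smul_right]
    _ ≤ ∑ i ∈ s, ‖c i‖ * ‖inner 𝕜 f (φ i)‖ := by
        simpa only [norm_mul] using norm_sum_le s fun i => c i * inner 𝕜 f (φ i)
    _ ≤ _ := Real.sum_mul_le_sqrt_mul_sqrt s _ _

lemma inner_sum_inner_smul_self (s : Finset ι) (φ : ι → E) (f : E) :
    inner 𝕜 f (∑ i ∈ s, inner 𝕜 (φ i) f • φ i) = ((∑ i ∈ s, ‖inner 𝕜 f (φ i)‖ ^ 2 : ℝ) : 𝕜) := by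
  simp only [inner_sum, inner_smul_right, RCLike.ofReal_sum]
  refine Finset.sum_congr rfl fun i _ => ?_
  rw [← inner_conj_symm (φ i) f, RCLike.conj_mul, RCLike.ofReal_pow]

lemma norm_sum_smul_le_iff_sqrt_sum_norm_inner_sq_le {s : Finset ι} {φ : ι → E} {C : ℝ}
    (hC : 0 ≤ C) :
    (∀ c : ι → 𝕜, ‖∑ i ∈ s, c i • φ i‖ ≤ C * √(∑ i ∈ s, ‖c i‖ ^ 2)) ↔
      ∀ f : E, √(∑ i ∈ s, ‖inner 𝕜 f (φ i)‖ ^ 2) ≤ C * ‖f‖ := by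
  constructor
  · intro hsynth f
    set S := ∑ i ∈ s, ‖inner 𝕜 f (φ i)‖ ^ 2 with hS
    have hS₀ : 0 ≤ S := by positivity
    refine le_of_sq_le_mul_self (by positivity) ?_
    calc √S ^ 2 = ‖inner 𝕜 f (∑ i ∈ s, inner 𝕜 (φ i) f • φ i)‖ := by
          rw [inner_sum_inner_smul_self, RCLike.norm_ofReal, abs_of_nonneg hS₀, Real.sq_sqrt hS₀]
      _ ≤ ‖f‖ * ‖∑ i ∈ s, inner 𝕜 (φ i) f • φ i‖ := norm_inner_le_norm _ _
      _ ≤ ‖f‖ * (C * √S) := by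
          gcongr
          simpa only [hS, norm_inner_symm f] using hsynth fun i => inner 𝕜 (φ i) f
      _ = C * ‖f‖ * √S := by ring
  · intro hanalysis c
    set g := ∑ i ∈ s, c i • φ i
    refine le_of_sq_le_mul_self (by positivity) ?_
    calc ‖g‖ ^ 2 = ‖inner 𝕜 g g‖ := by rw [inner_self_eq_norm_sq_to_K]; simp
      _ ≤ √(∑ i ∈ s, ‖c i‖ ^ 2) * √(∑ i ∈ s, ‖inner 𝕜 g (φ i)‖ ^ 2) :=
          norm_inner_sum_smul_le s φ c g
      _ ≤ √(∑ i ∈ s, ‖c i‖ ^ 2) * (C * ‖g‖) := by gcongr; exact hanalysis g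
      _ = C * √(∑ i ∈ s, ‖c i‖ ^ 2) * ‖g‖ := by ring

end FiniteFamilies

lemma sqrt_tsum_norm_add_sq_le {ι E : Type*} [SeminormedAddCommGroup E] {a b : ι → E}
    (ha : Summable fun i => ‖a i‖ ^ 2) (hb : Summable fun i => ‖b i‖ ^ 2) :
    √(∑' i, ‖a i + b i‖ ^ 2) ≤ √(∑' i, ‖a i‖ ^ 2) + √(∑' i, ‖b i‖ ^ 2) := by
  have hminkowski : (Summable fun i => (‖a i‖ + ‖b i‖) ^ 2) ∧
      √(∑' i, (‖a i‖ + ‖b i‖) ^ 2) ≤ √(∑' i, ‖a i‖ ^ 2) + √(∑' i, ‖b i‖ ^ 2) := by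
    simpa only [Real.sqrt_eq_rpow, Real.rpow_two] using
      Real.Lp_add_le_tsum_of_nonneg one_le_two (fun i => norm_nonneg (a i))
        (fun i => norm_nonneg (b i)) (by simpa only [Real.rpow_two] using ha)
        (by simpa only [Real.rpow_two] using hb)
  have hle (i : ι) : ‖a i + b i‖ ^ 2 ≤ (‖a i‖ + ‖b i‖) ^ 2 := by gcongr; exact norm_add_le _ _
  have hsum := hminkowski.1.of_nonneg_of_le (fun _ => sq_nonneg _) hle
  exact (Real.sqrt_le_sqrt (hsum.tsum_le_tsum hle hminkowski.1)).trans hminkowski.2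

lemma hasSum_indicator_smul {R M ι : Type*} [Zero R] [AddCommMonoid M] [SMulWithZero R M]
    [TopologicalSpace M] (s : Finset ι) (c : ι → R) (v : ι → M) :
    HasSum (fun i => (s : Set ι).indicator c i • v i) (∑ i ∈ s, c i • v i) := by
  simpa only [← Set.indicator_smul_left] using
    hasSum_subtype_iff_indicator.1 (s.hasSum fun i => c i • v i)

lemma hasSum_norm_indicator_sq {E ι : Type*} [SeminormedAddCommGroup E] (s : Finset ι)
    (c : ι → E) :
    HasSum (fun i => ‖(s : Set ι).indicator c i‖ ^ 2) (∑ i ∈ s, ‖c i‖ ^ 2) := by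
  convert hasSum_subtype_iff_indicator.1 (s.hasSum fun i => ‖c i‖ ^ 2) using 2 with i
  by_cases hi : i ∈ (s : Set ι) <;> simp [hi]

lemma norm_sum_smul_sub_le_of_hasSum {𝕜 E ι : Type*} [NormedField 𝕜] [SeminormedAddCommGroup E]
    [NormedSpace 𝕜 E] {φ ψ : ι → E} {lam₁ lam₂ μ : ℝ}
    (hpert : ∀ c : ι → 𝕜, Summable (fun i => ‖c i‖ ^ 2) →
      ∀ sφ sψ sd : E, HasSum (fun i => c i • φ i) sφ → HasSum (fun i => c i • ψ i) sψ →
        HasSum (fun i => c i • (φ i - ψ i)) sd →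
        ‖sd‖ ≤ lam₁ * ‖sφ‖ + lam₂ * ‖sψ‖ + μ * √(∑' i, ‖c i‖ ^ 2))
    (s : Finset ι) (c : ι → 𝕜) :
    ‖∑ i ∈ s, c i • (φ i - ψ i)‖ ≤ lam₁ * ‖∑ i ∈ s, c i • φ i‖
      + lam₂ * ‖∑ i ∈ s, c i • ψ i‖ + μ * √(∑ i ∈ s, ‖c i‖ ^ 2) := by
  have hnorm := hasSum_norm_indicator_sq s c
  simpa only [hnorm.tsum_eq] using hpert ((s : Set ι).indicator c) hnorm.summable _ _ _
    (hasSum_indicator_smul s c φ) (hasSum_indicator_smul s c ψ)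
    (hasSum_indicator_smul s c fun i => φ i - ψ i)

lemma sub_weaving {E ι : Type*} [AddGroup E] (φ ψ : ι → E) (J : Set ι) :
    φ - weaving φ ψ J = weaving 0 (φ - ψ) J := by
  ext i
  by_cases hi : i ∈ J <;> simp [weaving, hi]

section Frames

variable {E ι : Type*} [NormedAddCommGroup E] [InnerProductSpace ℂ E] {φ ψ χ : ι → E}
  {A B B' D Aφ Bφ Bψ C lam₁ lam₂ μ : ℝ}

lemma isBesselWith_zero : IsBesselWith (0 : ι → E) 0 := by
  simp [IsBesselWith, summable_zero]

lemma IsFrameWith.isBesselWith (hφ : IsFrameWith φ A B) : IsBesselWith φ B :=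
  fun f => ⟨(hφ.2.2 f).1, (hφ.2.2 f).2.2⟩

lemma IsFrameWith.sqrt_mul_norm_le (hφ : IsFrameWith φ A B) (f : E) :
    √A * ‖f‖ ≤ √(∑' i, ‖⟪f, φ i⟫‖ ^ 2) := by
  simpa only [Real.sqrt_mul' A (sq_nonneg ‖f‖), Real.sqrt_sq (norm_nonneg f)] using
    Real.sqrt_le_sqrt (hφ.2.2 f).2.1

lemma IsBesselWith.sqrt_tsum_le (hφ : IsBesselWith φ B) (f : E) :
    √(∑' i, ‖⟪f, φ i⟫‖ ^ 2) ≤ √B * ‖f‖ := by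
  simpa only [Real.sqrt_mul' B (sq_nonneg ‖f‖), Real.sqrt_sq (norm_nonneg f)] using
    Real.sqrt_le_sqrt (hφ f).2

lemma IsBesselWith.norm_sum_smul_le (hφ : IsBesselWith φ B) (s : Finset ι) (c : ι → ℂ) :
    ‖∑ i ∈ s, c i • φ i‖ ≤ √B * √(∑ i ∈ s, ‖c i‖ ^ 2) :=
  (norm_sum_smul_le_iff_sqrt_sum_norm_inner_sq_le (Real.sqrt_nonneg B)).2 (fun f =>
    (Real.sqrt_le_sqrt ((hφ f).1.sum_le_tsum s fun _ _ => sq_nonneg _)).trans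
      (hφ.sqrt_tsum_le f)) c

lemma isBesselWith_sq_of_norm_sum_smul_le (hC : 0 ≤ C)
    (h : ∀ (s : Finset ι) (c : ι → ℂ), ‖∑ i ∈ s, c i • φ i‖ ≤ C * √(∑ i ∈ s, ‖c i‖ ^ 2)) :
    IsBesselWith φ (C ^ 2) := by
  intro f
  have hbound (s : Finset ι) : ∑ i ∈ s, ‖⟪f, φ i⟫‖ ^ 2 ≤ C ^ 2 * ‖f‖ ^ 2 := by
    rw [← mul_pow]
    exact (Real.sqrt_le_iff.1
      ((norm_sum_smul_le_iff_sqrt_sum_norm_inner_sq_le hC).1 (h s) f)).2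
  have hsum := summable_of_sum_le (fun i => sq_nonneg ‖⟪f, φ i⟫‖) hbound
  exact ⟨hsum, hsum.tsum_le_of_sum_le hbound⟩

lemma IsBesselWith.sub_of_perturbation (hφ : IsBesselWith φ Bφ) (hψ : IsBesselWith ψ Bψ)
    (hlam₁ : 0 ≤ lam₁) (hlam₂ : 0 ≤ lam₂) (hμ : 0 ≤ μ)
    (hpert : ∀ (s : Finset ι) (c : ι → ℂ),
      ‖∑ i ∈ s, c i • (φ i - ψ i)‖ ≤ lam₁ * ‖∑ i ∈ s, c i • φ i‖
        + lam₂ * ‖∑ i ∈ s, c i • ψ i‖ + μ * √(∑ i ∈ s, ‖c i‖ ^ 2)) :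
    IsBesselWith (φ - ψ) ((lam₁ * √Bφ + lam₂ * √Bψ + μ) ^ 2) := by
  refine isBesselWith_sq_of_norm_sum_smul_le (by positivity) fun s c => ?_
  set N := √(∑ i ∈ s, ‖c i‖ ^ 2)
  calc ‖∑ i ∈ s, c i • (φ - ψ) i‖
      ≤ lam₁ * ‖∑ i ∈ s, c i • φ i‖ + lam₂ * ‖∑ i ∈ s, c i • ψ i‖ + μ * N := hpert s c
    _ ≤ lam₁ * (√Bφ * N) + lam₂ * (√Bψ * N) + μ * N := by
        gcongr
        exacts [hφ.norm_sum_smul_le s c, hψ.norm_sum_smul_le s c]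
    _ = (lam₁ * √Bφ + lam₂ * √Bψ + μ) * N := by ring

lemma IsFrameWith.of_isBesselWith_sub (hφ : IsFrameWith φ A B) (hχ : IsBesselWith χ B')
    (hsub : IsBesselWith (φ - χ) D) (hDA : D < A) (hAB' : A ≤ B') :
    IsFrameWith χ ((√A - √D) ^ 2) B' := by
  have hgap : 0 < √A - √D := sub_pos.2 ((Real.sqrt_lt_sqrt_iff_of_pos hφ.1).2 hDA)
  have hgap_le : (√A - √D) ^ 2 ≤ A :=
    (Real.le_sqrt hgap.le hφ.1.le).1 (sub_le_self _ (Real.sqrt_nonneg D))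
  refine ⟨by positivity, hgap_le.trans hAB', fun f => ⟨(hχ f).1, ?_, (hχ f).2⟩⟩
  have htriangle : √A * ‖f‖ ≤ √(∑' i, ‖⟪f, χ i⟫‖ ^ 2) + √D * ‖f‖ :=
    calc √A * ‖f‖ ≤ √(∑' i, ‖⟪f, φ i⟫‖ ^ 2) := hφ.sqrt_mul_norm_le f
      _ = √(∑' i, ‖⟪f, χ i⟫ + ⟪f, (φ - χ) i⟫‖ ^ 2) := by
          simp only [← inner_add_right, Pi.sub_apply, add_sub_cancel]
      _ ≤ √(∑' i, ‖⟪f, χ i⟫‖ ^ 2) + √(∑' i, ‖⟪f, (φ - χ) i⟫‖ ^ 2) :=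
          sqrt_tsum_norm_add_sq_le (hχ f).1 (hsub f).1
      _ ≤ √(∑' i, ‖⟪f, χ i⟫‖ ^ 2) + √D * ‖f‖ := by gcongr; exact hsub.sqrt_tsum_le f
  rw [← mul_pow, ← Real.le_sqrt (by positivity) (tsum_nonneg fun _ => sq_nonneg _)]
  linarith

lemma IsBesselWith.isBesselWith_weaving (hφ : IsBesselWith φ Bφ) (hψ : IsBesselWith ψ Bψ)
    (J : Set ι) : IsBesselWith (weaving φ ψ J) (Bφ + Bψ) := by
  intro f
  have hle (i : ι) : ‖⟪f, weaving φ ψ J i⟫‖ ^ 2 ≤ ‖⟪f, φ i⟫‖ ^ 2 + ‖⟪f, ψ i⟫‖ ^ 2 := by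
    by_cases hi : i ∈ J <;> simp [weaving, hi]
  have hadd := (hφ f).1.add (hψ f).1
  have hsum := hadd.of_nonneg_of_le (fun _ => sq_nonneg _) hle
  refine ⟨hsum, ?_⟩
  calc ∑' i, ‖⟪f, weaving φ ψ J i⟫‖ ^ 2
      ≤ ∑' i, (‖⟪f, φ i⟫‖ ^ 2 + ‖⟪f, ψ i⟫‖ ^ 2) := hsum.tsum_le_tsum hle hadd
    _ = ∑' i, ‖⟪f, φ i⟫‖ ^ 2 + ∑' i, ‖⟪f, ψ i⟫‖ ^ 2 := (hφ f).1.tsum_add (hψ f).1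
    _ ≤ Bφ * ‖f‖ ^ 2 + Bψ * ‖f‖ ^ 2 := add_le_add (hφ f).2 (hψ f).2
    _ = (Bφ + Bψ) * ‖f‖ ^ 2 := by ring

theorem woven_of_perturbation_general (hφ : IsFrameWith φ Aφ Bφ) (hψ : IsBesselWith ψ Bψ)
    (hBψ : 0 ≤ Bψ) (hlam₁ : 0 ≤ lam₁) (hlam₂ : 0 ≤ lam₂) (hμ : 0 ≤ μ)
    (hpert : ∀ (s : Finset ι) (c : ι → ℂ),
      ‖∑ i ∈ s, c i • (φ i - ψ i)‖ ≤ lam₁ * ‖∑ i ∈ s, c i • φ i‖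
        + lam₂ * ‖∑ i ∈ s, c i • ψ i‖ + μ * √(∑ i ∈ s, ‖c i‖ ^ 2))
    (hcond : lam₁ * √Bφ + lam₂ * √Bψ + μ < √Aφ) (J : Set ι) :
    IsFrameWith (weaving φ ψ J) ((√Aφ - lam₁ * √Bφ - lam₂ * √Bψ - μ) ^ 2) (Bφ + Bψ) := by
  set ε := lam₁ * √Bφ + lam₂ * √Bψ + μ with hε
  have hε₀ : 0 ≤ ε := by positivity
  have hdiff : IsBesselWith (φ - ψ) (ε ^ 2) :=
    hφ.isBesselWith.sub_of_perturbation hψ hlam₁ hlam₂ hμ hpert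
  have hsub : IsBesselWith (φ - weaving φ ψ J) (ε ^ 2) := by
    simpa only [sub_weaving, zero_add] using isBesselWith_zero.isBesselWith_weaving hdiff J
  have hframe := hφ.of_isBesselWith_sub (hφ.isBesselWith.isBesselWith_weaving hψ J) hsub
    ((Real.lt_sqrt hε₀).1 hcond) (hφ.2.1.trans (le_add_of_nonneg_right hBψ))
  rwa [Real.sqrt_sq hε₀, hε, ← sub_sub, ← sub_sub] at hframe

end Frames

/-- (Perturbation.) Let `φ` and `ψ` be frames with bounds
`Aφ ≤ Bφ` and `Aψ ≤ Bψ`. Suppose there are nonnegative `λ₁, λ₂, μ` such that for every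
`ℓ²` coefficient sequence `c` (with `sφ = ∑ c i • φ i`, `sψ = ∑ c i • ψ i`,
`sd = ∑ c i • (φ i - ψ i)`) one has
`‖sd‖ ≤ λ₁ ‖sφ‖ + λ₂ ‖sψ‖ + μ (∑ |c i|²)^(1/2)`, and that
`λ₁ √Bφ + λ₂ √Bψ + μ < √Aφ`. Then `φ` and `ψ` are woven with universal lower bound
`(√Aφ - λ₁ √Bφ - λ₂ √Bψ - μ)²` and universal upper bound `Bφ + Bψ`. -/
theorem woven_of_perturbation (φ ψ : I → H) (Aφ Bφ Aψ Bψ : ℝ)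
    (hφ : IsFrameWith φ Aφ Bφ) (hψ : IsFrameWith ψ Aψ Bψ)
    (lam₁ lam₂ μ : ℝ) (hlam₁ : 0 ≤ lam₁) (hlam₂ : 0 ≤ lam₂) (hμ : 0 ≤ μ)
    (hpert : ∀ c : I → ℂ, Summable (fun i => ‖c i‖ ^ 2) →
      ∀ sφ sψ sd : H, HasSum (fun i => c i • φ i) sφ → HasSum (fun i => c i • ψ i) sψ →
        HasSum (fun i => c i • (φ i - ψ i)) sd →
        ‖sd‖ ≤ lam₁ * ‖sφ‖ + lam₂ * ‖sψ‖ + μ * Real.sqrt (∑' i, ‖c i‖ ^ 2))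
    (hcond : lam₁ * Real.sqrt Bφ + lam₂ * Real.sqrt Bψ + μ < Real.sqrt Aφ) :
    ∀ J : Set I, IsFrameWith (weaving φ ψ J)
      ((Real.sqrt Aφ - lam₁ * Real.sqrt Bφ - lam₂ * Real.sqrt Bψ - μ) ^ 2)
      (Bφ + Bψ) :=
  woven_of_perturbation_general hφ hψ.isBesselWith (hψ.1.le.trans hψ.2.1) hlam₁ hlam₂ hμ
    (norm_sum_smul_sub_le_of_hasSum hpert) hcond
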